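/- Let Y be a real random variable distributed according to the Gaussian measure with mean μ ∈ ℝ and variance σ² where σ > 0, let a ∈ ℝ, and let ξ ≥ 0 be an exploration–exploitation parameter. Then E[max(Y − a − ξ, 0)] = (μ − a − ξ)·Φ(Z) + σ·φ(Z), where Z = (μ − a − ξ)/σ, φ is the standard normal probability density function and Φ the standard normal cumulative distribution function. (This is the closed form of the Expected Improvement acquisition function with exploration trade-off parameter ξ.) -/

import Mathlib

open MeasureTheory Set ProbabilityTheory

/-- The standard normal probability density function φ. -/
noncomputable def stdNormalPDF (z : ℝ) : ℝ :=
  (1 / Real.sqrt (2 * Real.pi)) * Real.exp (-z ^ 2 / 2)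

/-- The standard normal cumulative distribution function Φ. -/
noncomputable def stdNormalCDF (z : ℝ) : ℝ :=
  ∫ t in Iic z, stdNormalPDF t

lemma stdNormalPDF_eq_gaussianPDFReal : stdNormalPDF = gaussianPDFReal 0 1 := by
  ext z
  simp [stdNormalPDF, gaussianPDFReal]

lemma integrable_stdNormalPDF : Integrable stdNormalPDF := by
  rw [stdNormalPDF_eq_gaussianPDFReal]
  exact integrable_gaussianPDFReal 0 1

lemma integrable_mul_stdNormalPDF : Integrable fun z ↦ z * stdNormalPDF z := by
  convert (integrable_mul_exp_neg_mul_sq (b := 1 / 2) (by norm_num)).const_mul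
    (1 / Real.sqrt (2 * Real.pi)) using 2 with z
  rw [stdNormalPDF, show -z ^ 2 / 2 = -(1 / 2) * z ^ 2 by ring]
  ring

lemma hasDerivAt_stdNormalPDF (z : ℝ) : HasDerivAt stdNormalPDF (-(z * stdNormalPDF z)) z := by
  have h : HasDerivAt (fun x : ℝ ↦ -x ^ 2 / 2) (-z) z :=
    ((hasDerivAt_pow 2 z).fun_neg.div_const 2).congr_deriv (by norm_num; ring)
  refine (h.exp.const_mul (1 / Real.sqrt (2 * Real.pi))).congr_deriv ?_
  rw [stdNormalPDF]
  ring

lemma integral_Iic_mul_stdNormalPDF (z : ℝ) :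
    ∫ t in Iic z, t * stdNormalPDF t = -stdNormalPDF z := by
  have hint : IntegrableOn (fun t ↦ -(t * stdNormalPDF t)) (Iic z) :=
    integrable_mul_stdNormalPDF.neg.integrableOn
  have h := integral_Iic_of_hasDerivAt_of_tendsto' (fun t _ ↦ hasDerivAt_stdNormalPDF t) hint
    (tendsto_zero_of_hasDerivAt_of_integrableOn_Iic (fun t _ ↦ hasDerivAt_stdNormalPDF t) hint
      integrable_stdNormalPDF.integrableOn)
  rw [integral_neg, sub_zero] at h
  linarith

lemma integral_max_sub_zero_gaussianReal (z : ℝ) :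
    ∫ x, max (z - x) 0 ∂(gaussianReal 0 1) = z * stdNormalCDF z + stdNormalPDF z := by
  have hind : ∀ x, stdNormalPDF x • max (z - x) 0 =
      (Iic z).indicator (fun x ↦ z * stdNormalPDF x - x * stdNormalPDF x) x := by
    intro x
    by_cases hx : x ≤ z
    · rw [indicator_of_mem (mem_Iic.2 hx), max_eq_left (sub_nonneg.2 hx), smul_eq_mul]
      ring
    · rw [indicator_of_notMem (by simpa using hx), max_eq_right (by linarith), smul_zero]
  rw [integral_gaussianReal_eq_integral_smul one_ne_zero, ← stdNormalPDF_eq_gaussianPDFReal]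
  simp_rw [hind]
  rw [integral_indicator measurableSet_Iic,
    integral_sub (integrable_stdNormalPDF.const_mul z).integrableOn
      integrable_mul_stdNormalPDF.integrableOn,
    integral_const_mul, integral_Iic_mul_stdNormalPDF, sub_neg_eq_add, stdNormalCDF]

lemma gaussianReal_eq_map_const_sub_mul (μ σ : ℝ) :
    gaussianReal μ ⟨σ ^ 2, sq_nonneg σ⟩ = (gaussianReal 0 1).map fun x ↦ μ - σ * x := by
  have h := Measure.map_map (μ := gaussianReal 0 1) (f := fun x ↦ σ * x) (g := fun x ↦ μ - x)
    (by fun_prop) (by fun_prop)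
  rw [gaussianReal_map_const_mul, gaussianReal_map_const_sub, mul_zero, sub_zero, mul_one] at h
  exact h

/-- If `Y ~ N(μ, σ²)` with `σ > 0` and `ξ ≥ 0`, then
`E[max(Y − a − ξ, 0)] = (μ − a − ξ)·Φ(Z) + σ·φ(Z)` with `Z = (μ − a − ξ)/σ`.
This is the closed form of the Expected Improvement acquisition function with
exploration–exploitation trade-off parameter `ξ`. -/
theorem expectedImprovement_gaussian_tradeoff (μ a σ ξ : ℝ) (hσ : 0 < σ) (hξ : 0 ≤ ξ) :
    ∫ y, max (y - a - ξ) 0 ∂(gaussianReal μ ⟨σ ^ 2, sq_nonneg σ⟩) =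
      (μ - a - ξ) * stdNormalCDF ((μ - a - ξ) / σ) +
        σ * stdNormalPDF ((μ - a - ξ) / σ) := by
  rw [gaussianReal_eq_map_const_sub_mul, integral_map (by fun_prop) (by fun_prop)]
  have hscale : ∀ x, max (μ - σ * x - a - ξ) 0 = σ * max ((μ - a - ξ) / σ - x) 0 := by
    intro x
    rw [mul_max_of_nonneg _ _ hσ.le, mul_zero, mul_sub, mul_div_cancel₀ _ hσ.ne']
    ring_nf
  simp_rw [hscale]
  rw [integral_const_mul, integral_max_sub_zero_gaussianReal]
  field_simp
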